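/- arXiv:1512.02876 — 2 statements merged into one kernel-verified Lean document; each statement's English description precedes it below -/
import Mathlib

section
/- Let d be a natural number with d ≥ 3 and d ≠ 4, and let y₁, y₂ ∈ ℝ^d with y₁ ≠ y₂. Let U be the open set of points x ∈ ℝ^d such that x ≠ y₁ and (y₁ − y₂) + λ(x − y₁) ≠ 0 for all λ ∈ [0, 1] (in particular x ≠ y₂). Define on U the function g_loc(x) = (‖x − y₁‖^{4−d} / (2(4−d))) · ∫₀¹ ‖(y₁ − y₂) + λ(x − y₁)‖^{2−d} dλ. Then for every x ∈ U, Δ g_loc(x) = ‖x − y₁‖^{2−d} ‖x − y₂‖^{2−d}, where Δ is the Euclidean Laplacian on ℝ^d. -/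
/-!
Put `w = x - y₁`, `a = y₁ - y₂`, `p = 4 - d`, `q = 2 - d`, and `F(x) = ∫₀¹ ‖a + l w‖ ^ q dl`, so that
the function in question is `‖w‖ ^ p F / (2p)`. The Leibniz rule (`laplacian_mul`) gives
`Δ(‖w‖ ^ p F) = ‖w‖ ^ p ΔF + 2 p ‖w‖ ^ (p - 2) w · ∇F + F Δ‖w‖ ^ p`.

* `‖·‖ ^ q` is harmonic away from the origin (`sum_second_partials_norm_rpow` with `q + d - 2 = 0`),
  and differentiating twice under the integral sign (`hasFDerivAt_segment_integral`) gives `ΔF = 0`.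
* `Δ‖w‖ ^ p = p (p + d - 2) ‖w‖ ^ (p - 2) = 2 p ‖w‖ ^ (2 - d)`.

After division by `2p`, what is left is `‖w‖ ^ (2 - d) (F + w · ∇F)`, and `F + w · ∇F` is the
integral over `[0, 1]` of the derivative of `l ↦ l ‖a + l w‖ ^ q`, hence equals `‖a + w‖ ^ q = ‖x - y₂‖ ^ (2 - d)`
(`integral_add_radial`).
-/

open MeasureTheory Set

/-- The Euclidean Laplacian of `f : ℝ^d → ℝ`, as the sum of the second partial
derivatives along the standard coordinate directions. -/
noncomputable def laplacian {d : ℕ} (f : EuclideanSpace ℝ (Fin d) → ℝ)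
    (x : EuclideanSpace ℝ (Fin d)) : ℝ :=
  ∑ i : Fin d,
    fderiv ℝ (fun y => fderiv ℝ f y (EuclideanSpace.single i 1)) x
      (EuclideanSpace.single i 1)

open Filter Topology

/-! ### Powers of the Euclidean norm -/

section Radial

variable {d : ℕ}

lemma hasFDerivAt_norm_rpow_of_ne (p : ℝ) {w : EuclideanSpace ℝ (Fin d)} (hw : w ≠ 0) :
    HasFDerivAt (fun w : EuclideanSpace ℝ (Fin d) => ‖w‖ ^ p)
      ((p * ‖w‖ ^ (p - 2)) • innerSL ℝ w) w := by
  have hpos : 0 < ‖w‖ := norm_pos_iff.2 hw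
  have h := ((hasStrictFDerivAt_norm_sq w).hasFDerivAt).rpow_const (p := p / 2)
    (Or.inl (by positivity))
  have e : ∀ s : ℝ, ∀ v : EuclideanSpace ℝ (Fin d), (‖v‖ ^ 2) ^ s = ‖v‖ ^ (2 * s) := by
    intro s v
    rw [← Real.rpow_natCast, ← Real.rpow_mul (norm_nonneg _)]
    norm_num
  simp only [e] at h
  have e1 : 2 * (p / 2) = p := by ring
  have e2 : 2 * (p / 2 - 1) = p - 2 := by ring
  rw [e1, e2] at h
  refine h.congr_fderiv ?_
  ext v
  simp
  ring

lemma hasFDerivAt_norm_rpow_mul_coord (p c : ℝ) (i : Fin d)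
    {w : EuclideanSpace ℝ (Fin d)} (hw : w ≠ 0) :
    HasFDerivAt (fun w : EuclideanSpace ℝ (Fin d) => c * ‖w‖ ^ p * w i)
      ((c * p * ‖w‖ ^ (p - 2) * w i) • innerSL ℝ w +
        (c * ‖w‖ ^ p) • (EuclideanSpace.proj i : EuclideanSpace ℝ (Fin d) →L[ℝ] ℝ)) w := by
  have h := ((hasFDerivAt_norm_rpow_of_ne p hw).const_mul c).mul
    (EuclideanSpace.proj i : EuclideanSpace ℝ (Fin d) →L[ℝ] ℝ).hasFDerivAt
  refine h.congr_fderiv ?_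
  ext v
  simp
  ring

/-- The Laplacian of `‖·‖ ^ p` away from the origin is `p (p + d - 2) ‖·‖ ^ (p - 2)`, with the second
derivatives in the explicit form of `hasFDerivAt_norm_rpow_mul_coord`. -/
lemma sum_second_partials_norm_rpow (p : ℝ) {w : EuclideanSpace ℝ (Fin d)} (hw : w ≠ 0) :
    ∑ i : Fin d, ((p * (p - 2) * ‖w‖ ^ (p - 2 - 2) * w i) • innerSL ℝ w +
        (p * ‖w‖ ^ (p - 2)) • (EuclideanSpace.proj i : EuclideanSpace ℝ (Fin d) →L[ℝ] ℝ))
        (EuclideanSpace.single i 1) = p * (p + d - 2) * ‖w‖ ^ (p - 2) := by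
  have hpos : 0 < ‖w‖ := norm_pos_iff.2 hw
  have hs : ∑ i : Fin d, w i * w i = ‖w‖ ^ 2 := by
    rw [EuclideanSpace.real_norm_sq_eq]
    exact Finset.sum_congr rfl fun i _ => by ring
  have hp : ‖w‖ ^ (p - 2 - 2) * ‖w‖ ^ 2 = ‖w‖ ^ (p - 2) := by
    rw [← Real.rpow_natCast, ← Real.rpow_add hpos]
    norm_num
  have : ∀ i : Fin d, ((p * (p - 2) * ‖w‖ ^ (p - 2 - 2) * w i) • innerSL ℝ w +
        (p * ‖w‖ ^ (p - 2)) • (EuclideanSpace.proj i : EuclideanSpace ℝ (Fin d) →L[ℝ] ℝ))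
        (EuclideanSpace.single i 1) =
        (p * (p - 2) * ‖w‖ ^ (p - 2 - 2)) * (w i * w i) + p * ‖w‖ ^ (p - 2) := by
    intro i
    simp [EuclideanSpace.inner_single_right]
    ring
  rw [Finset.sum_congr rfl fun i _ => this i, Finset.sum_add_distrib, ← Finset.mul_sum, hs,
    mul_assoc, hp]
  simp
  ring

end Radial

/-! ### Integrals along segments -/

section Param

variable {d : ℕ}

/-- Avoidance of the origin by the segment from `a` to `a + (x - y)` is an open condition on `x`. -/
lemma eventually_segment_ne (a y x : EuclideanSpace ℝ (Fin d))
    (hx : ∀ l : ℝ, l ∈ Icc (0 : ℝ) 1 → a + l • (x - y) ≠ 0) :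
    ∀ᶠ z in 𝓝 x, ∀ l : ℝ, l ∈ Icc (0 : ℝ) 1 → a + l • (z - y) ≠ 0 := by
  refine isCompact_Icc.eventually_forall_of_forall_eventually fun l hl => ?_
  have hc : Continuous fun q : EuclideanSpace ℝ (Fin d) × ℝ => a + q.2 • (q.1 - y) := by
    fun_prop
  exact hc.continuousAt.eventually_ne (hx l hl)

lemma continuousOn_segment {F : Type*} [TopologicalSpace F] {h : EuclideanSpace ℝ (Fin d) → F}
    (hh : ContinuousOn h {0}ᶜ) {a y x : EuclideanSpace ℝ (Fin d)}
    (hx : ∀ l : ℝ, l ∈ Icc (0 : ℝ) 1 → a + l • (x - y) ≠ 0) :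
    ContinuousOn (fun l : ℝ => h (a + l • (x - y))) (Icc 0 1) :=
  hh.comp (by fun_prop) hx

/-- Differentiation under the integral sign for a function `h` that is `C¹` away from the origin,
integrated with weight `l ^ k` along a segment avoiding the origin. The derivative has the same form
with `k + 1` in place of `k`, so the lemma can be iterated. -/
lemma hasFDerivAt_segment_integral (k : ℕ) {h : EuclideanSpace ℝ (Fin d) → ℝ}
    {h' : EuclideanSpace ℝ (Fin d) → EuclideanSpace ℝ (Fin d) →L[ℝ] ℝ}
    (hd : ∀ w, w ≠ 0 → HasFDerivAt h (h' w) w) (hc : ContinuousOn h' {0}ᶜ)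
    {a y x : EuclideanSpace ℝ (Fin d)}
    (hx : ∀ l : ℝ, l ∈ Icc (0 : ℝ) 1 → a + l • (x - y) ≠ 0) :
    HasFDerivAt (fun z => ∫ l in (0 : ℝ)..1, l ^ k * h (a + l • (z - y)))
      (∫ l in (0 : ℝ)..1, l ^ (k + 1) • h' (a + l • (x - y))) x := by
  have hcont : ContinuousOn h {0}ᶜ := fun w hw => (hd w hw).continuousAt.continuousWithinAt
  obtain ⟨ε, hε, hball⟩ := Metric.nhds_basis_closedBall.mem_iff.1 (eventually_segment_ne a y x hx)
  have hK : IsCompact (Metric.closedBall x ε ×ˢ Icc (0 : ℝ) 1) :=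
    (isCompact_closedBall x ε).prod isCompact_Icc
  have hcK : ContinuousOn (fun q : EuclideanSpace ℝ (Fin d) × ℝ =>
      q.2 ^ (k + 1) • h' (a + q.2 • (q.1 - y))) (Metric.closedBall x ε ×ˢ Icc (0 : ℝ) 1) := by
    have hin : Continuous fun q : EuclideanSpace ℝ (Fin d) × ℝ => a + q.2 • (q.1 - y) := by
      fun_prop
    refine (continuous_snd.pow (k + 1)).continuousOn.smul (hc.comp hin.continuousOn ?_)
    rintro ⟨z, l⟩ ⟨hz, hl⟩
    exact hball hz l hl
  obtain ⟨C, hC⟩ := hK.exists_bound_of_continuousOn hcK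
  have hI : uIoc (0 : ℝ) 1 ⊆ Icc 0 1 := by
    rw [uIoc_of_le zero_le_one]
    exact Ioc_subset_Icc_self
  have hval : ∀ z, (∀ l : ℝ, l ∈ Icc (0 : ℝ) 1 → a + l • (z - y) ≠ 0) →
      ContinuousOn (fun l : ℝ => l ^ k * h (a + l • (z - y))) (Icc 0 1) := fun z hz =>
    (continuous_pow k).continuousOn.mul (continuousOn_segment hcont hz)
  have hval' : ContinuousOn (fun l : ℝ => l ^ (k + 1) • h' (a + l • (x - y))) (Icc 0 1) :=
    (continuous_pow (k + 1)).continuousOn.smul (continuousOn_segment hc hx)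
  refine intervalIntegral.hasFDerivAt_integral_of_dominated_of_fderiv_le
    (F := fun z l => l ^ k * h (a + l • (z - y)))
    (F' := fun z l => l ^ (k + 1) • h' (a + l • (z - y)))
    (bound := fun _ => C) (Metric.closedBall_mem_nhds x hε) ?_ ?_ ?_ ?_ ?_ ?_
  · filter_upwards [eventually_segment_ne a y x hx] with z hz
    exact ((hval z hz).mono hI).aestronglyMeasurable measurableSet_uIoc
  · exact (hval x hx).intervalIntegrable_of_Icc zero_le_one
  · exact (hval'.mono hI).aestronglyMeasurable measurableSet_uIoc
  · exact Eventually.of_forall fun l hl z hz => hC (z, l) ⟨hz, hI hl⟩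
  · exact intervalIntegrable_const
  · refine Eventually.of_forall fun l hl z hz => ?_
    have hin : HasFDerivAt (fun z : EuclideanSpace ℝ (Fin d) => a + l • (z - y))
        (l • ContinuousLinearMap.id ℝ (EuclideanSpace ℝ (Fin d))) z :=
      (((hasFDerivAt_id z).sub_const y).const_smul l).const_add a
    have := ((hd _ (hball hz l (hI hl))).comp z hin).const_mul (l ^ k)
    refine this.congr_fderiv ?_
    ext v
    simp
    ring

end Param

/-! ### The Laplacian of a product -/

/-- Leibniz rule for the Laplacian. Here `u' i`, `v' i` are the first partial derivatives near `x`,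
and `u'' i`, `v'' i` are the total derivatives of these at `x`. -/
lemma laplacian_mul {d : ℕ} {u v : EuclideanSpace ℝ (Fin d) → ℝ}
    {u' v' : Fin d → EuclideanSpace ℝ (Fin d) → ℝ}
    {u'' v'' : Fin d → EuclideanSpace ℝ (Fin d) →L[ℝ] ℝ} {x : EuclideanSpace ℝ (Fin d)}
    (hu : ∀ᶠ z in 𝓝 x, ∃ L : EuclideanSpace ℝ (Fin d) →L[ℝ] ℝ, HasFDerivAt u L z ∧
      ∀ i, L (EuclideanSpace.single i 1) = u' i z)
    (hv : ∀ᶠ z in 𝓝 x, ∃ L : EuclideanSpace ℝ (Fin d) →L[ℝ] ℝ, HasFDerivAt v L z ∧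
      ∀ i, L (EuclideanSpace.single i 1) = v' i z)
    (hu' : ∀ i, HasFDerivAt (u' i) (u'' i) x) (hv' : ∀ i, HasFDerivAt (v' i) (v'' i) x) :
    laplacian (fun z => u z * v z) x =
      u x * (∑ i, v'' i (EuclideanSpace.single i 1)) + 2 * (∑ i, u' i x * v' i x) +
        v x * ∑ i, u'' i (EuclideanSpace.single i 1) := by
  obtain ⟨Lu, hLu, eu⟩ := hu.self_of_nhds
  obtain ⟨Lv, hLv, ev⟩ := hv.self_of_nhds
  unfold laplacian
  rw [Finset.mul_sum, Finset.mul_sum, Finset.mul_sum, ← Finset.sum_add_distrib,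
    ← Finset.sum_add_distrib]
  refine Finset.sum_congr rfl fun i _ => ?_
  have key : (fun y => fderiv ℝ (fun z => u z * v z) y (EuclideanSpace.single i 1)) =ᶠ[𝓝 x]
      fun y => u y * v' i y + v y * u' i y := by
    filter_upwards [hu, hv] with z ⟨L, hL, e⟩ ⟨M, hM, f⟩
    rw [(hL.fun_mul hM).fderiv]
    simp [e, f]
  rw [key.fderiv_eq, ((hLu.fun_mul (hv' i)).fun_add (hLv.fun_mul (hu' i))).fderiv]
  simp [eu, ev]
  ring

/-- The integrals on the left combine into that of the derivative of `l ↦ l * h (a + l • (x - y))`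
over `[0, 1]`. -/
lemma integral_add_radial {d : ℕ} {h : EuclideanSpace ℝ (Fin d) → ℝ}
    {h' : EuclideanSpace ℝ (Fin d) → EuclideanSpace ℝ (Fin d) →L[ℝ] ℝ}
    (hd : ∀ w, w ≠ 0 → HasFDerivAt h (h' w) w) (hc : ContinuousOn h' {0}ᶜ)
    {a y x : EuclideanSpace ℝ (Fin d)}
    (hx : ∀ l : ℝ, l ∈ Icc (0 : ℝ) 1 → a + l • (x - y) ≠ 0) :
    (∫ l in (0 : ℝ)..1, h (a + l • (x - y))) +
      (∫ l in (0 : ℝ)..1, l • h' (a + l • (x - y))) (x - y) = h (a + (x - y)) := by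
  have hcont : ContinuousOn h {0}ᶜ := fun w hw => (hd w hw).continuousAt.continuousWithinAt
  have i1 : IntervalIntegrable (fun l : ℝ => h (a + l • (x - y))) volume 0 1 :=
    (continuousOn_segment hcont hx).intervalIntegrable_of_Icc zero_le_one
  have i2 : IntervalIntegrable (fun l : ℝ => l • h' (a + l • (x - y))) volume 0 1 :=
    (continuousOn_id.smul
      (continuousOn_segment hc hx)).intervalIntegrable_of_Icc zero_le_one
  have i3 : IntervalIntegrable (fun l : ℝ => (l • h' (a + l • (x - y))) (x - y)) volume 0 1 :=
    ((continuousOn_id.smul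
      (continuousOn_segment hc hx)).clm_apply continuousOn_const).intervalIntegrable_of_Icc
        zero_le_one
  rw [ContinuousLinearMap.intervalIntegral_apply i2, ← intervalIntegral.integral_add i1 i3]
  rw [intervalIntegral.integral_eq_sub_of_hasDerivAt (f := fun l : ℝ => l * h (a + l • (x - y)))
    _ (i1.add i3)]
  · simp
  · intro l hl
    rw [uIcc_of_le zero_le_one] at hl
    have hin : HasDerivAt (fun l : ℝ => a + l • (x - y)) ((1 : ℝ) • (x - y)) l :=
      ((hasDerivAt_id l).smul_const (x - y)).const_add a
    have := (hasDerivAt_id l).mul ((hd _ (hx l hl)).comp_hasDerivAt l hin)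
    exact this.congr_deriv (by simp)

/-- The line-integral ("local") particular solution
`g_loc(x) = (r₁^{4-d}/(2(4-d))) ∫₀¹ ‖(y₁-y₂) + λ(x-y₁)‖^{2-d} dλ` solves the elementary
Poisson equation `Δ g_loc = r₁^{2-d} r₂^{2-d}` pointwise on its regularity domain. -/
theorem laplacian_g_loc (d : ℕ) (hd3 : 3 ≤ d) (hd4 : d ≠ 4)
    (y₁ y₂ : EuclideanSpace ℝ (Fin d)) (hy : y₁ ≠ y₂) :
    ∀ x : EuclideanSpace ℝ (Fin d), x ≠ y₁ →
      (∀ l : ℝ, l ∈ Icc (0 : ℝ) 1 → (y₁ - y₂) + l • (x - y₁) ≠ 0) →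
      laplacian
        (fun z => ‖z - y₁‖ ^ ((4 : ℝ) - (d : ℝ)) / (2 * ((4 : ℝ) - (d : ℝ))) *
          ∫ l in (0 : ℝ)..1, ‖(y₁ - y₂) + l • (z - y₁)‖ ^ ((2 : ℝ) - (d : ℝ))) x =
        ‖x - y₁‖ ^ ((2 : ℝ) - (d : ℝ)) * ‖x - y₂‖ ^ ((2 : ℝ) - (d : ℝ)) := by
  intro x hx1 hx
  have hp : (4 : ℝ) - d ≠ 0 := by
    intro h
    exact hd4 (by exact_mod_cast (sub_eq_zero.1 h).symm)
  have hpq : (2 : ℝ) - d = 4 - d - 2 := by ring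
  set p : ℝ := 4 - d with hpdef
  set q : ℝ := 2 - d with hqdef
  set a := y₁ - y₂ with ha
  have hw : x - y₁ ≠ 0 := sub_ne_zero.2 hx1
  -- `h'` is the derivative of `‖·‖ ^ q`, and `H i` that of its `i`-th partial derivative.
  set h' : EuclideanSpace ℝ (Fin d) → EuclideanSpace ℝ (Fin d) →L[ℝ] ℝ :=
    fun w => (q * ‖w‖ ^ (q - 2)) • innerSL ℝ w with hh'
  set H : Fin d → EuclideanSpace ℝ (Fin d) → EuclideanSpace ℝ (Fin d) →L[ℝ] ℝ :=
    fun i w => (q * (q - 2) * ‖w‖ ^ (q - 2 - 2) * w i) • innerSL ℝ w +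
        (q * ‖w‖ ^ (q - 2)) • (EuclideanSpace.proj i : EuclideanSpace ℝ (Fin d) →L[ℝ] ℝ) with hH
  have hpow : ∀ s : ℝ, ContinuousOn (fun w : EuclideanSpace ℝ (Fin d) => ‖w‖ ^ s) {0}ᶜ :=
    fun s => continuousOn_id.norm.rpow_const fun w hw => Or.inl (norm_ne_zero_iff.2 hw)
  have hcoord : ∀ i : Fin d, ContinuousOn (fun w : EuclideanSpace ℝ (Fin d) => w i) {0}ᶜ :=
    fun i => by fun_prop
  have hc' : ContinuousOn h' {0}ᶜ :=
    (continuousOn_const.mul (hpow _)).smul (innerSL ℝ).continuous.continuousOn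
  have hcH : ∀ i, ContinuousOn (H i) {0}ᶜ := fun i =>
    (((continuousOn_const.mul (hpow _)).mul (hcoord i)).smul
      (innerSL ℝ).continuous.continuousOn).add
      ((continuousOn_const.mul (hpow _)).smul continuousOn_const)
  have hd1 : ∀ w, w ≠ 0 → HasFDerivAt (fun w : EuclideanSpace ℝ (Fin d) => ‖w‖ ^ q) (h' w) w :=
    fun w hw => hasFDerivAt_norm_rpow_of_ne q hw
  have hd2 : ∀ i w, w ≠ 0 → HasFDerivAt
      (fun w : EuclideanSpace ℝ (Fin d) => q * ‖w‖ ^ (q - 2) * w i) (H i w) w :=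
    fun i w hw => hasFDerivAt_norm_rpow_mul_coord (q - 2) q i hw
  have hint' : ∀ z, (∀ l : ℝ, l ∈ Icc (0 : ℝ) 1 → a + l • (z - y₁) ≠ 0) →
      IntervalIntegrable (fun l : ℝ => l • h' (a + l • (z - y₁))) volume 0 1 := fun z hz =>
    (continuousOn_id.smul
      (continuousOn_segment hc' hz)).intervalIntegrable_of_Icc zero_le_one
  have hintH : ∀ i, IntervalIntegrable (fun l : ℝ => l ^ 2 • H i (a + l • (x - y₁))) volume 0 1 :=
    fun i => ((continuous_pow 2).continuousOn.smul
      (continuousOn_segment (hcH i) hx)).intervalIntegrable_of_Icc zero_le_one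
  have hF : ∀ z, (∀ l : ℝ, l ∈ Icc (0 : ℝ) 1 → a + l • (z - y₁) ≠ 0) →
      HasFDerivAt (fun z => ∫ l in (0 : ℝ)..1, ‖a + l • (z - y₁)‖ ^ q)
        (∫ l in (0 : ℝ)..1, l • h' (a + l • (z - y₁))) z := fun z hz => by
    simpa using hasFDerivAt_segment_integral 0 hd1 hc' hz
  have hFi : ∀ z, (∀ l : ℝ, l ∈ Icc (0 : ℝ) 1 → a + l • (z - y₁) ≠ 0) → ∀ i : Fin d,
      (∫ l in (0 : ℝ)..1, l • h' (a + l • (z - y₁))) (EuclideanSpace.single i 1) =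
      ∫ l in (0 : ℝ)..1, l ^ 1 * (q * ‖a + l • (z - y₁)‖ ^ (q - 2) * (a + l • (z - y₁)) i) := by
    intro z hz i
    rw [ContinuousLinearMap.intervalIntegral_apply (hint' z hz)]
    refine intervalIntegral.integral_congr fun l _ => ?_
    simp [hh', EuclideanSpace.inner_single_right]
    ring
  have hne : ∀ᶠ z in 𝓝 x, z - y₁ ≠ 0 :=
    (continuous_id.sub continuous_const).continuousAt.eventually_ne hw
  have hshift : HasFDerivAt (fun z : EuclideanSpace ℝ (Fin d) => z - y₁)
      (ContinuousLinearMap.id ℝ (EuclideanSpace ℝ (Fin d))) x := (hasFDerivAt_id x).sub_const y₁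
  have main := laplacian_mul (x := x)
    (u := fun z => ‖z - y₁‖ ^ p / (2 * p))
    (v := fun z => ∫ l in (0 : ℝ)..1, ‖a + l • (z - y₁)‖ ^ q)
    (u' := fun i z => (2 * p)⁻¹ * (p * ‖z - y₁‖ ^ (p - 2) * (z - y₁) i))
    (v' := fun i z => ∫ l in (0 : ℝ)..1,
      l ^ 1 * (q * ‖a + l • (z - y₁)‖ ^ (q - 2) * (a + l • (z - y₁)) i))
    (u'' := fun i => (2 * p)⁻¹ • ((p * (p - 2) * ‖x - y₁‖ ^ (p - 2 - 2) * (x - y₁) i) •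
      innerSL ℝ (x - y₁) + (p * ‖x - y₁‖ ^ (p - 2)) •
        (EuclideanSpace.proj i : EuclideanSpace ℝ (Fin d) →L[ℝ] ℝ)))
    (v'' := fun i => ∫ l in (0 : ℝ)..1, l ^ 2 • H i (a + l • (x - y₁)))
    ?_ ?_ ?_ ?_
  · have hharm : ∑ i, (∫ l in (0 : ℝ)..1, l ^ 2 • H i (a + l • (x - y₁)))
        (EuclideanSpace.single i 1) = 0 := by
      have e : ∀ i, (∫ l in (0 : ℝ)..1, l ^ 2 • H i (a + l • (x - y₁)))
          (EuclideanSpace.single i 1) = ∫ l in (0 : ℝ)..1,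
            (l ^ 2 • H i (a + l • (x - y₁))) (EuclideanSpace.single i 1) := fun i =>
        ContinuousLinearMap.intervalIntegral_apply (hintH i) _
      rw [Finset.sum_congr rfl fun i _ => e i, ← intervalIntegral.integral_finsetSum]
      · refine (intervalIntegral.integral_congr (g := fun _ => (0 : ℝ)) fun l hl => ?_).trans
          (by simp)
        rw [uIcc_of_le zero_le_one] at hl
        have := sum_second_partials_norm_rpow q (hx l hl)
        have hz : q + d - 2 = 0 := by rw [hqdef]; ring
        rw [hz, mul_zero, zero_mul] at this
        simp only [smul_apply, ← Finset.smul_sum]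
        rw [this, smul_zero]
      · intro i _
        exact (((continuous_pow 2).continuousOn.smul (continuousOn_segment (hcH i) hx)).clm_apply
          continuousOn_const).intervalIntegrable_of_Icc zero_le_one
    have hrad : ∑ i, (2 * p)⁻¹ * (p * ‖x - y₁‖ ^ (p - 2) * (x - y₁) i) *
        (∫ l in (0 : ℝ)..1,
          l ^ 1 * (q * ‖a + l • (x - y₁)‖ ^ (q - 2) * (a + l • (x - y₁)) i)) =
        2⁻¹ * ‖x - y₁‖ ^ (p - 2) *
          (∫ l in (0 : ℝ)..1, l • h' (a + l • (x - y₁))) (x - y₁) := by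
      have hdec : x - y₁ = ∑ i, (x - y₁) i • EuclideanSpace.single i (1 : ℝ) := by
        ext j
        simp [Finset.sum_apply, Pi.single_apply]
      have hL : ∀ L : EuclideanSpace ℝ (Fin d) →L[ℝ] ℝ,
          L (x - y₁) = ∑ i, (x - y₁) i * L (EuclideanSpace.single i 1) := by
        intro L
        conv_lhs => rw [hdec]
        rw [map_sum]
        simp
      rw [hL, Finset.mul_sum]
      refine Finset.sum_congr rfl fun i _ => ?_
      rw [hFi x hx i]
      generalize (∫ l in (0 : ℝ)..1, _ : ℝ) = I
      field_simp
    have htel := integral_add_radial hd1 hc' hx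
    have hend : a + (x - y₁) = x - y₂ := by rw [ha]; abel
    rw [hend] at htel
    rw [main, hharm, hrad, ← htel]
    simp only [smul_apply, ← Finset.smul_sum]
    rw [sum_second_partials_norm_rpow p hw, hpq]
    have h2 : p + d - 2 = 2 := by rw [hpdef]; ring
    rw [h2, smul_eq_mul]
    field_simp
    ring
  · filter_upwards [hne] with z hz
    refine ⟨_, ((hasFDerivAt_norm_rpow_of_ne p hz).comp z
      ((hasFDerivAt_id z).sub_const y₁)).mul_const (2 * p)⁻¹, fun i => ?_⟩
    simp [EuclideanSpace.inner_single_right]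
  · filter_upwards [eventually_segment_ne a y₁ x hx] with z hz
    exact ⟨_, hF z hz, hFi z hz⟩
  · intro i
    exact ((hasFDerivAt_norm_rpow_mul_coord (p - 2) p i hw).comp x hshift).const_mul (2 * p)⁻¹
  · intro i
    exact hasFDerivAt_segment_integral 1 (hd2 i) (hcH i) hx
end

section
/- Let d be a natural number with d ≥ 5 and let u ∈ ℝ^d with u ≠ 0. Let V be the open set of points x ∈ ℝ^d such that x + λu ≠ 0 for all λ ≥ 1. Then for every x ∈ V the integral h(x) = ∫₁^∞ ‖x + λu‖^{2−d} dλ converges absolutely, and h is harmonic on V, i.e. Δh(x) = 0 for all x ∈ V, where Δ is the Euclidean Laplacian on ℝ^d. -/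
/-!
The kernel `z ↦ ‖z‖ ^ (2 - d)` is harmonic away from the origin, and the claim is that the
Laplacian may be taken under the integral sign along the ray `l ↦ x + l u`, `l ≥ 1`.

The ray never meets the origin and its direction `u` is nonzero, so by compactness (of the segment
`{t x + u : t ∈ [0, 1]}`, with `t = 1 / l`) there is `c > 0` with `c l ≤ ‖y + l u‖` for all `l ≥ 1`,
uniformly for `y` near `x` (`exists_linear_lower_bound`). Hence any kernel which together with its
derivative is bounded by powers `‖z‖ ^ p`, `p < -1`, is dominated on the ray by an integrable power
of `l`, and can be differentiated under the integral (`hasFDerivAt_integral_ray`). This is applied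
to the kernel itself and to its directional derivatives; the resulting integrand for the Laplacian
vanishes identically because `∑ i, z i ^ 2 = ‖z‖ ^ 2`.
-/

open MeasureTheory Set

open Filter Topology

lemma norm_le_of_linear_lower_bound {E F : Type*} [NormedAddCommGroup E]
    [NormedAddCommGroup F] {c l A p : ℝ} {w : E} {v : F} (hc : 0 < c) (hl : 1 ≤ l)
    (hw : c * l ≤ ‖w‖) (hA : 0 ≤ A) (hp : p < -1) (hv : ‖v‖ ≤ A * ‖w‖ ^ p) :
    ‖v‖ ≤ A * c ^ p * l ^ p := by
  have hl0 : 0 < l := by linarith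
  rw [mul_assoc, ← Real.mul_rpow hc.le hl0.le]
  exact hv.trans (mul_le_mul_of_nonneg_left
    (Real.rpow_le_rpow_of_nonpos (by positivity) hw (by linarith)) hA)

section Ray

variable {E F : Type*} [NormedAddCommGroup E] [InnerProductSpace ℝ E]
  [NormedAddCommGroup F]

/-- Along the rays issued from points near `x`, the distance to the origin grows at least linearly,
with a uniform constant. -/
lemma exists_linear_lower_bound {u x : E} (hu : u ≠ 0)
    (hx : ∀ l : ℝ, 1 ≤ l → x + l • u ≠ 0) :
    ∃ c : ℝ, 0 < c ∧ ∀ y ∈ Metric.ball x c, ∀ l : ℝ, 1 ≤ l → c * l ≤ ‖y + l • u‖ := by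
  obtain ⟨t, ht, hmin⟩ := (isCompact_Icc (a := (0 : ℝ)) (b := 1)).exists_isMinOn
    ⟨0, by simp⟩ (f := fun t : ℝ => ‖t • x + u‖) (by fun_prop)
  have hpos : 0 < ‖t • x + u‖ := by
    rw [norm_pos_iff]
    rcases ht.1.eq_or_lt with h0 | h0
    · simpa [← h0] using hu
    · intro h
      apply hx t⁻¹ ((one_le_inv₀ h0).2 ht.2)
      have := congrArg (fun z => t⁻¹ • z) h
      simpa [smul_smul, inv_mul_cancel₀ h0.ne'] using this
  refine ⟨‖t • x + u‖ / 2, by positivity, fun y hy l hl => ?_⟩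
  have hl0 : 0 < l := by linarith
  have h1 : ‖t • x + u‖ ≤ ‖l⁻¹ • x + u‖ :=
    hmin (show l⁻¹ ∈ Icc (0 : ℝ) 1 from ⟨by positivity, inv_le_one_of_one_le₀ hl⟩)
  have h2 : ‖x + l • u‖ = l * ‖l⁻¹ • x + u‖ := by
    rw [← abs_of_pos hl0, ← Real.norm_eq_abs, ← norm_smul, Real.norm_eq_abs, abs_of_pos hl0,
      smul_add, smul_smul, mul_inv_cancel₀ hl0.ne', one_smul]
  have h3 : ‖x + l • u‖ ≤ ‖y + l • u‖ + ‖y - x‖ := by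
    have := norm_sub_le (y + l • u) (y - x)
    rwa [show y + l • u - (y - x) = x + l • u by abel] at this
  have h4 : ‖y - x‖ < ‖t • x + u‖ / 2 := by simpa [dist_eq_norm] using hy
  nlinarith

/-- A kernel continuous away from the origin and decaying faster than `‖z‖⁻¹` is integrable along a
ray avoiding the origin. -/
lemma integrableOn_ray {u x : E} (hu : u ≠ 0) (hx : ∀ l : ℝ, 1 ≤ l → x + l • u ≠ 0)
    {G : E → F} (hG : ContinuousOn G {0}ᶜ) {A p : ℝ} (hA : 0 ≤ A) (hp : p < -1)
    (hGb : ∀ z ≠ 0, ‖G z‖ ≤ A * ‖z‖ ^ p) :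
    IntegrableOn (fun l : ℝ => G (x + l • u)) (Ioi 1) volume := by
  obtain ⟨c, hc, hb⟩ := exists_linear_lower_bound hu hx
  refine ((integrableOn_Ioi_rpow_of_lt hp one_pos).const_mul (A * c ^ p)).mono' ?_ ?_
  · refine ContinuousOn.aestronglyMeasurable ?_ measurableSet_Ioi
    exact hG.comp (by fun_prop) (fun l hl => hx l (le_of_lt hl))
  · refine (ae_restrict_iff' measurableSet_Ioi).2 (Eventually.of_forall fun l hl => ?_)
    have hl1 : 1 ≤ l := le_of_lt hl
    exact norm_le_of_linear_lower_bound hc hl1 (hb x (Metric.mem_ball_self hc) l hl1) hA hp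
      (hGb _ (hx l hl1))

/-- Differentiation under the integral along a ray avoiding the origin. -/
lemma hasFDerivAt_integral_ray [NormedSpace ℝ F] {u x : E} (hu : u ≠ 0)
    (hx : ∀ l : ℝ, 1 ≤ l → x + l • u ≠ 0) {G : E → F} {G' : E → E →L[ℝ] F} (hG : ∀ z ≠ 0, HasFDerivAt G (G' z) z)
    (hG' : ContinuousOn G' {0}ᶜ) {A B p q : ℝ} (hA : 0 ≤ A) (hB : 0 ≤ B)
    (hp : p < -1) (hq : q < -1) (hGb : ∀ z ≠ 0, ‖G z‖ ≤ A * ‖z‖ ^ p)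
    (hGb' : ∀ z ≠ 0, ‖G' z‖ ≤ B * ‖z‖ ^ q) :
    HasFDerivAt (fun y => ∫ l in Ioi (1 : ℝ), G (y + l • u))
      (∫ l in Ioi (1 : ℝ), G' (x + l • u)) x := by
  obtain ⟨c, hc, hb⟩ := exists_linear_lower_bound hu hx
  have hne : ∀ y ∈ Metric.ball x c, ∀ l : ℝ, 1 ≤ l → y + l • u ≠ 0 := fun y hy l hl =>
    norm_pos_iff.1 (lt_of_lt_of_le (by positivity) (hb y hy l hl))
  have hGc : ContinuousOn G {0}ᶜ := fun z hz => (hG z hz).continuousAt.continuousWithinAt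
  refine hasFDerivAt_integral_of_dominated_of_fderiv_le (F := fun y l => G (y + l • u))
    (F' := fun y l => G' (y + l • u)) (bound := fun l => B * c ^ q * l ^ q)
    (Metric.ball_mem_nhds x hc) ?_ (integrableOn_ray hu hx hGc hA hp hGb)
    (integrableOn_ray hu hx hG' hB hq hGb').aestronglyMeasurable ?_
    ((integrableOn_Ioi_rpow_of_lt hq one_pos).const_mul _) ?_
  · filter_upwards [Metric.ball_mem_nhds x hc] with y hy
    exact (integrableOn_ray hu (hne y hy) hGc hA hp hGb).aestronglyMeasurable
  · refine (ae_restrict_iff' measurableSet_Ioi).2 (Eventually.of_forall fun l hl y hy => ?_)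
    have hl1 : 1 ≤ l := le_of_lt hl
    exact norm_le_of_linear_lower_bound hc hl1 (hb y hy l hl1) hB hq (hGb' _ (hne y hy l hl1))
  · refine (ae_restrict_iff' measurableSet_Ioi).2 (Eventually.of_forall fun l hl y hy => ?_)
    have h := hG _ (hne y hy l (le_of_lt hl))
    exact h.comp y ((hasFDerivAt_id y).add_const (l • u))

end Ray

section Kernel

variable {E : Type*} [NormedAddCommGroup E] [InnerProductSpace ℝ E]

/-- The derivative of `z ↦ ‖z‖ ^ b` at `z ≠ 0`. -/
noncomputable def normRpowDeriv (b : ℝ) (z : E) : E →L[ℝ] ℝ :=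
  (b * ‖z‖ ^ (b - 2)) • innerSL ℝ z

/-- The derivative of `z ↦ normRpowDeriv b z v` at `z ≠ 0`. -/
noncomputable def normRpowDeriv₂ (b : ℝ) (v z : E) : E →L[ℝ] ℝ :=
  (b * inner ℝ z v) • normRpowDeriv (b - 2) z + (b * ‖z‖ ^ (b - 2)) • innerSL ℝ v

lemma hasFDerivAt_norm_rpow_of_ne_s12 (b : ℝ) {z : E} (hz : z ≠ 0) :
    HasFDerivAt (fun z : E => ‖z‖ ^ b) (normRpowDeriv b z) z := by
  have hpos : 0 < ‖z‖ := norm_pos_iff.2 hz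
  have key : ∀ (w : E) (s : ℝ), (‖w‖ ^ 2) ^ (s / 2) = ‖w‖ ^ s := fun w s => by
    rw [← Real.rpow_natCast, ← Real.rpow_mul (norm_nonneg _)]
    congr 1
    push_cast
    ring
  have h := (hasStrictFDerivAt_norm_sq z).hasFDerivAt.rpow_const (p := b / 2)
    (Or.inl (by positivity))
  simp only [key, show b / 2 - 1 = (b - 2) / 2 by ring] at h
  refine h.congr_fderiv ?_
  ext w
  simp [normRpowDeriv]
  ring

lemma continuousOn_norm_rpow (b : ℝ) : ContinuousOn (fun z : E => ‖z‖ ^ b) {0}ᶜ := fun _ hz =>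
  (hasFDerivAt_norm_rpow_of_ne_s12 b hz).continuousAt.continuousWithinAt

lemma continuousOn_normRpowDeriv (b : ℝ) :
    ContinuousOn (normRpowDeriv b : E → E →L[ℝ] ℝ) {0}ᶜ :=
  (continuousOn_const.mul (continuousOn_norm_rpow (b - 2))).smul
    (innerSL ℝ (E := E)).continuous.continuousOn

lemma norm_normRpowDeriv (b : ℝ) {z : E} (hz : z ≠ 0) :
    ‖normRpowDeriv b z‖ = |b| * ‖z‖ ^ (b - 1) := by
  have hpos : 0 < ‖z‖ := norm_pos_iff.2 hz
  rw [normRpowDeriv, norm_smul, innerSL_apply_norm, norm_mul, Real.norm_eq_abs,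
    Real.norm_of_nonneg (by positivity), mul_assoc, ← Real.rpow_add_one hpos.ne']
  ring_nf

lemma hasFDerivAt_normRpowDeriv_apply (b : ℝ) (v : E) {z : E} (hz : z ≠ 0) :
    HasFDerivAt (fun z : E => normRpowDeriv b z v) (normRpowDeriv₂ b v z) z := by
  have h1 := (hasFDerivAt_norm_rpow_of_ne_s12 (b - 2) hz).const_mul b
  have h2 : HasFDerivAt (fun z : E => inner ℝ z v) (innerSL ℝ v) z := by
    simpa [real_inner_comm] using (innerSL ℝ v).hasFDerivAt (x := z)
  refine (h1.mul h2).congr_fderiv ?_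
  ext w
  simp [normRpowDeriv₂]
  ring

lemma continuousOn_normRpowDeriv₂ (b : ℝ) (v : E) :
    ContinuousOn (normRpowDeriv₂ b v) {0}ᶜ := by
  have h1 : ContinuousOn (fun z : E => b * inner ℝ z v) {0}ᶜ := by fun_prop
  have h2 : ContinuousOn (fun z : E => b * ‖z‖ ^ (b - 2)) {0}ᶜ :=
    continuousOn_const.mul (continuousOn_norm_rpow (b - 2))
  exact (h1.smul (continuousOn_normRpowDeriv (b - 2))).add
    (h2.smul (continuousOn_const (c := innerSL ℝ v)))

lemma norm_normRpowDeriv₂_le (b : ℝ) (v : E) {z : E} (hz : z ≠ 0) :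
    ‖normRpowDeriv₂ b v z‖ ≤ (|b| * ‖v‖ * |b - 2| + |b| * ‖v‖) * ‖z‖ ^ (b - 2) := by
  have hpos : 0 < ‖z‖ := norm_pos_iff.2 hz
  refine (norm_add_le _ _).trans ?_
  rw [norm_smul, norm_smul, norm_normRpowDeriv _ hz, innerSL_apply_norm, norm_mul, norm_mul,
    Real.norm_eq_abs b, Real.norm_of_nonneg (by positivity : 0 ≤ ‖z‖ ^ (b - 2))]
  have h1 : ‖inner ℝ z v‖ ≤ ‖z‖ * ‖v‖ := norm_inner_le_norm z v
  have h2 : ‖z‖ ^ (b - 2) = ‖z‖ ^ (b - 2 - 1) * ‖z‖ := by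
    rw [← Real.rpow_add_one hpos.ne']
    ring_nf
  calc _ ≤ |b| * (‖z‖ * ‖v‖) * (|b - 2| * ‖z‖ ^ (b - 2 - 1)) + |b| * ‖z‖ ^ (b - 2) * ‖v‖ := by
        gcongr
    _ = _ := by
        rw [h2]
        ring

end Kernel

/-- The kernel `‖z‖ ^ (2 - d)` is harmonic away from the origin of `ℝ^d`. -/
lemma sum_normRpowDeriv₂_eq_zero {d : ℕ} {z : EuclideanSpace ℝ (Fin d)} (hz : z ≠ 0) :
    ∑ i : Fin d, normRpowDeriv₂ ((2 : ℝ) - d) (EuclideanSpace.single i 1) z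
      (EuclideanSpace.single i 1) = 0 := by
  have hpos : 0 < ‖z‖ := norm_pos_iff.2 hz
  have h2 : ‖z‖ ^ ((2 : ℝ) - d - 2) = ‖z‖ ^ ((2 : ℝ) - d - 2 - 2) * ‖z‖ ^ 2 := by
    rw [← Real.rpow_natCast, ← Real.rpow_add hpos]
    congr 1
    push_cast
    ring
  have h3 : ∀ i : Fin d, normRpowDeriv₂ ((2 : ℝ) - d) (EuclideanSpace.single i 1) z
      (EuclideanSpace.single i 1) =
      ((2 : ℝ) - d) * ((2 : ℝ) - d - 2) * ‖z‖ ^ ((2 : ℝ) - d - 2 - 2) * z i ^ 2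
        + ((2 : ℝ) - d) * ‖z‖ ^ ((2 : ℝ) - d - 2) := fun i => by
    simp [normRpowDeriv₂, normRpowDeriv, EuclideanSpace.inner_single_right]
    ring
  simp only [h3]
  rw [Finset.sum_add_distrib, ← Finset.mul_sum, ← EuclideanSpace.real_norm_sq_eq, h2]
  simp
  ring

/-- For `d ≥ 5` and `u ≠ 0`, the semi-infinite line integral
`h(x) = ∫₁^∞ ‖x + λu‖^{2-d} dλ` converges absolutely and defines a harmonic function on
the open set of points `x` with `x + λu ≠ 0` for all `λ ≥ 1`. -/
theorem harmonic_semi_infinite_line_integral (d : ℕ) (hd : 5 ≤ d)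
    (u : EuclideanSpace ℝ (Fin d)) (hu : u ≠ 0) :
    ∀ x ∈ {x : EuclideanSpace ℝ (Fin d) | ∀ l : ℝ, 1 ≤ l → x + l • u ≠ 0},
      IntegrableOn (fun l : ℝ => ‖x + l • u‖ ^ ((2 : ℝ) - (d : ℝ))) (Ioi 1) volume ∧
      laplacian
        (fun z => ∫ l in Ioi (1 : ℝ), ‖z + l • u‖ ^ ((2 : ℝ) - (d : ℝ))) x = 0 := by
  intro x hx
  have hd' : (5 : ℝ) ≤ d := by exact_mod_cast hd
  set b : ℝ := (2 : ℝ) - d with hb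
  have hb3 : b ≤ -3 := by linarith
  have hker : ∀ z : EuclideanSpace ℝ (Fin d), z ≠ 0 → ‖‖z‖ ^ b‖ ≤ 1 * ‖z‖ ^ b := fun z _ => by
    rw [Real.norm_of_nonneg (by positivity), one_mul]
  have hker' : ∀ z : EuclideanSpace ℝ (Fin d), z ≠ 0 →
      ‖normRpowDeriv b z‖ ≤ |b| * ‖z‖ ^ (b - 1) := fun z hz => (norm_normRpowDeriv b hz).le
  refine ⟨integrableOn_ray hu hx (continuousOn_norm_rpow b) zero_le_one (by linarith) hker, ?_⟩
  obtain ⟨c, hc, hlow⟩ := exists_linear_lower_bound hu hx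
  have hne : ∀ y ∈ Metric.ball x c, ∀ l : ℝ, 1 ≤ l → y + l • u ≠ 0 := fun y hy l hl =>
    norm_pos_iff.1 (lt_of_lt_of_le (by positivity) (hlow y hy l hl))
  -- The second derivative requires the formula for the first one in a whole neighbourhood of `x`.
  have hfirst : ∀ v : EuclideanSpace ℝ (Fin d),
      (fun y => fderiv ℝ (fun z => ∫ l in Ioi (1 : ℝ), ‖z + l • u‖ ^ b) y v) =ᶠ[𝓝 x]
        fun y => ∫ l in Ioi (1 : ℝ), normRpowDeriv b (y + l • u) v := fun v => by
    filter_upwards [Metric.ball_mem_nhds x hc] with y hy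
    rw [(hasFDerivAt_integral_ray hu (hne y hy) (fun z hz => hasFDerivAt_norm_rpow_of_ne_s12 b hz)
      (continuousOn_normRpowDeriv b) zero_le_one (abs_nonneg b) (by linarith)
      (by linarith) hker hker').fderiv]
    exact ContinuousLinearMap.integral_apply (integrableOn_ray hu (hne y hy)
      (continuousOn_normRpowDeriv b) (abs_nonneg b) (by linarith) hker') v
  have hsecond_int : ∀ v : EuclideanSpace ℝ (Fin d),
      IntegrableOn (fun l : ℝ => normRpowDeriv₂ b v (x + l • u)) (Ioi 1) volume := fun v =>
    integrableOn_ray hu hx (continuousOn_normRpowDeriv₂ b v) (by positivity)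
      (by linarith : b - 2 < -1) (fun z hz => norm_normRpowDeriv₂_le b v hz)
  have hsecond : ∀ v : EuclideanSpace ℝ (Fin d),
      fderiv ℝ (fun y => fderiv ℝ (fun z => ∫ l in Ioi (1 : ℝ), ‖z + l • u‖ ^ b) y v) x v =
        ∫ l in Ioi (1 : ℝ), normRpowDeriv₂ b v (x + l • u) v := fun v => by
    have hbound : ∀ z : EuclideanSpace ℝ (Fin d), z ≠ 0 →
        ‖normRpowDeriv b z v‖ ≤ |b| * ‖v‖ * ‖z‖ ^ (b - 1) := fun z hz => by
      refine ((normRpowDeriv b z).le_opNorm v).trans_eq ?_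
      rw [norm_normRpowDeriv b hz]
      ring
    rw [(hfirst v).fderiv_eq, (hasFDerivAt_integral_ray hu hx
      (fun z hz => hasFDerivAt_normRpowDeriv_apply b v hz) (continuousOn_normRpowDeriv₂ b v)
      (by positivity) (by positivity) (by linarith) (by linarith : b - 2 < -1) hbound
      (fun z hz => norm_normRpowDeriv₂_le b v hz)).fderiv]
    exact ContinuousLinearMap.integral_apply (hsecond_int v) v
  simp only [laplacian, hsecond]
  rw [← integral_finsetSum _ fun i _ => (hsecond_int _).apply_continuousLinearMap _]
  exact setIntegral_eq_zero_of_forall_eq_zero fun l hl =>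
    sum_normRpowDeriv₂_eq_zero (hx l (le_of_lt hl))
end
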